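/- Every generalized Wheeler language is star-free: if L ⊆ Σ* is Wheeler with respect to some linear order ≺ on Σ, then L belongs to the class of star-free languages over Σ. -/

import Mathlib

/-!
Common framework: words over an ordered alphabet, co-lexicographic order,
(partial) DFAs and NFAs, Wheeler automata and Wheeler languages,
following "Ordering regular languages: a danger zone".
-/

namespace WheelerPaper

/-- Strict co-lexicographic order on words: compare the reverses lexicographically. -/
def Colex {A : Type} [LinearOrder A] (x y : List A) : Prop :=
  List.Lex (· < ·) x.reverse y.reverse

/-- Non-strict co-lexicographic order. -/
def ColexLE {A : Type} [LinearOrder A] (x y : List A) : Prop :=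
  Colex x y ∨ x = y

/-- Right context `α⁻¹L` of a word `α` with respect to a language `L`. -/
def rc {A : Type} (L : Set (List A)) (α : List A) : Set (List A) :=
  {γ | α ++ γ ∈ L}

/-- `Pref L`: the set of prefixes of words of `L`. -/
def Pref {A : Type} (L : Set (List A)) : Set (List A) :=
  {α | ∃ β, α ++ β ∈ L}

/-- `wpow γ i` is `γ^i`, the `i`-fold concatenation of the word `γ`. -/
def wpow {A : Type} (γ : List A) : ℕ → List A
  | 0 => []
  | n + 1 => γ ++ wpow γ n

/-- A DFA with a possibly partial transition function. -/
structure PDFA (A : Type) (Q : Type) where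
  init : Q
  trans : Q → A → Option Q
  accept : Q → Prop

/-- Extended (partial) transition function of a `PDFA`. -/
def PDFA.evalFrom {A Q : Type} (M : PDFA A Q) : Q → List A → Option Q
  | q, [] => some q
  | q, a :: w => (M.trans q a).bind fun q' => PDFA.evalFrom M q' w

/-- The language accepted by a `PDFA`. -/
def PDFA.accepts {A Q : Type} (M : PDFA A Q) : Set (List A) :=
  {w | ∃ q, M.evalFrom M.init w = some q ∧ M.accept q}

/-- A `PDFA` is trim if every state is reachable from the initial state and
every state can reach some accepting state. -/
def PDFA.Trim {A Q : Type} (M : PDFA A Q) : Prop :=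
  (∀ q : Q, ∃ α, M.evalFrom M.init α = some q) ∧
  (∀ q : Q, ∃ α q', M.evalFrom q α = some q' ∧ M.accept q')

/-- `r` is a Wheeler order for the DFA `M`: a strict total order on states whose
minimum is the initial state, the initial state has no incoming transitions, and
the two Wheeler conditions hold. -/
def IsWheelerOrder {A Q : Type} [LinearOrder A] (M : PDFA A Q) (r : Q → Q → Prop) : Prop :=
  IsStrictTotalOrder Q r ∧
  (∀ q : Q, q ≠ M.init → r M.init q) ∧
  (∀ (q : Q) (a : A), M.trans q a ≠ some M.init) ∧
  (∀ (u₁ : Q) (a₁ : A) (v₁ : Q) (u₂ : Q) (a₂ : A) (v₂ : Q),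
     M.trans u₁ a₁ = some v₁ → M.trans u₂ a₂ = some v₂ →
     (a₁ < a₂ → r v₁ v₂) ∧ (a₁ = a₂ → r u₁ u₂ → (r v₁ v₂ ∨ v₁ = v₂)))

/-- A language is Wheeler (w.r.t. the given order on the alphabet) if it is
recognized by some Wheeler DFA. -/
def IsWheelerLang {A : Type} [LinearOrder A] (L : Set (List A)) : Prop :=
  ∃ (n : ℕ) (M : PDFA A (Fin n)) (r : Fin n → Fin n → Prop),
    IsWheelerOrder M r ∧ M.accepts = L

/-- A language is regular if it is recognized by some finite-state (partial) DFA. -/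
def IsRegular {A : Type} (L : Set (List A)) : Prop :=
  ∃ (k : ℕ) (M : PDFA A (Fin k)), M.accepts = L

/-- The input-consistent convex refinement `≡^c_L` of the Myhill–Nerode
equivalence: same right context, same last character (or both empty), and every
word of `Pref L` co-lexicographically between the two words has the same right
context. -/
def EquivC {A : Type} [LinearOrder A] (L : Set (List A)) (α β : List A) : Prop :=
  rc L α = rc L β ∧ α.getLast? = β.getLast? ∧
  ∀ γ ∈ Pref L,
    ((ColexLE α γ ∧ ColexLE γ β) ∨ (ColexLE β γ ∧ ColexLE γ α)) →
    rc L γ = rc L α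

/-- An NFA with a single initial state. -/
structure NFA' (A : Type) (Q : Type) where
  init : Q
  trans : Q → A → Set Q
  accept : Q → Prop

/-- One step of an `NFA'` on a set of states. -/
def NFA'.stepSet {A Q : Type} (M : NFA' A Q) (S : Set Q) (a : A) : Set Q :=
  {q | ∃ p ∈ S, q ∈ M.trans p a}

/-- Extended transition function of an `NFA'` on sets of states. -/
def NFA'.evalFrom {A Q : Type} (M : NFA' A Q) : Set Q → List A → Set Q
  | S, [] => S
  | S, a :: w => NFA'.evalFrom M (M.stepSet S a) w

/-- The language accepted by an `NFA'`. -/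
def NFA'.accepts {A Q : Type} (M : NFA' A Q) : Set (List A) :=
  {w | ∃ q ∈ M.evalFrom {M.init} w, M.accept q}

/-- An `NFA'` is trim if every state is reachable from the initial state and
every state can reach some accepting state. -/
def NFA'.Trim {A Q : Type} (M : NFA' A Q) : Prop :=
  (∀ q : Q, ∃ α, q ∈ M.evalFrom {M.init} α) ∧
  (∀ q : Q, ∃ α, ∃ q' ∈ M.evalFrom {q} α, M.accept q')

/-- `r` is a Wheeler order for the NFA `M`. -/
def IsWheelerNFAOrder {A Q : Type} [LinearOrder A] (M : NFA' A Q) (r : Q → Q → Prop) : Prop :=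
  IsStrictTotalOrder Q r ∧
  (∀ q : Q, q ≠ M.init → r M.init q) ∧
  (∀ (q : Q) (a : A), M.init ∉ M.trans q a) ∧
  (∀ (u₁ : Q) (a₁ : A) (v₁ : Q) (u₂ : Q) (a₂ : A) (v₂ : Q),
     v₁ ∈ M.trans u₁ a₁ → v₂ ∈ M.trans u₂ a₂ →
     (a₁ < a₂ → r v₁ v₂) ∧ (a₁ = a₂ → r u₁ u₂ → (r v₁ v₂ ∨ v₁ = v₂)))

/-- `I` is an interval with respect to the strict order `r`. -/
def IsIntervalRel {Q : Type} (r : Q → Q → Prop) (I : Set Q) : Prop :=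
  ∀ x y z : Q, (r x y ∨ x = y) → (r y z ∨ y = z) → x ∈ I → z ∈ I → y ∈ I

/-- The class of star-free languages: built from `∅`, `{ε}` and the singletons
`{a}` by union, concatenation and complement. -/
inductive StarFree {A : Type} : Set (List A) → Prop
  | empty : StarFree ∅
  | eps : StarFree {[]}
  | single (a : A) : StarFree {[a]}
  | union {L₁ L₂ : Set (List A)} : StarFree L₁ → StarFree L₂ → StarFree (L₁ ∪ L₂)
  | concat {L₁ L₂ : Set (List A)} : StarFree L₁ → StarFree L₂ →
      StarFree {w | ∃ u v, u ∈ L₁ ∧ v ∈ L₂ ∧ w = u ++ v}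
  | compl {L : Set (List A)} : StarFree L → StarFree Lᶜ


/-- The language of all words over the sub-alphabet `S`. -/
def wordsOver {A : Type} (S : Set A) : Language A := {w | ∀ x ∈ w, x ∈ S}



/-! ### Closure properties of star-free languages -/

theorem SF.univ {A : Type} : StarFree (Set.univ : Set (List A)) := by
  have h := StarFree.compl (StarFree.empty (A := A))
  rwa [Set.compl_empty] at h

theorem SF.inter {A : Type} {L₁ L₂ : Set (List A)} (h₁ : StarFree L₁) (h₂ : StarFree L₂) :
    StarFree (L₁ ∩ L₂) := by
  have h := StarFree.compl (StarFree.union h₁.compl h₂.compl)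
  rwa [Set.compl_union, compl_compl, compl_compl] at h

theorem SF.iUnion {A ι : Type} [Finite ι] (L : ι → Set (List A)) (h : ∀ i, StarFree (L i)) :
    StarFree (⋃ i, L i) := by
  classical
  have := Fintype.ofFinite ι
  have key : ∀ s : Finset ι, StarFree (⋃ i ∈ s, L i) := by
    intro s
    induction s using Finset.induction_on with
    | empty => simpa using StarFree.empty
    | insert a s _ ih =>
      rw [Finset.set_biUnion_insert]
      exact (h a).union ih
  simpa using key Finset.univ

/-- Finite unions guarded by a proposition. -/
theorem SF.guarded {A : Type} {L : Set (List A)} (P : Prop) (h : P → StarFree L) :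
    StarFree {w | P ∧ w ∈ L} := by
  by_cases hP : P
  · simpa [hP] using h hP
  · simpa [hP] using StarFree.empty

theorem SF.word {A : Type} (u : List A) : StarFree ({u} : Set (List A)) := by
  induction u with
  | nil => exact StarFree.eps
  | cons a u ih =>
    have h := StarFree.concat (StarFree.single a) ih
    convert h using 1
    ext w
    simp

theorem SF.length {A : Type} [Finite A] (n : ℕ) : StarFree {w : List A | w.length = n} := by
  induction n with
  | zero =>
    convert StarFree.eps (A := A) using 1
    ext w
    simp
  | succ n ih =>
    have h := StarFree.concat (SF.iUnion _ fun a : A => StarFree.single a) ih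
    convert h using 1
    ext w
    cases w with
    | nil => simp
    | cons a w => simp

/-- The set of words `w = u z = z u` is star-free. -/
theorem SF.comm {A : Type} [Finite A] (u : List A) (hu : u ≠ []) :
    StarFree {w | ∃ z, w = u ++ z ∧ w = z ++ u} := by
  obtain ⟨m, hm⟩ : ∃ m, u.length = m + 1 :=
    ⟨u.length - 1, by have := List.length_pos_iff.2 hu; omega⟩
  have hbad : StarFree (⋃ p : A × A, {w : List A | p.1 ≠ p.2 ∧ w ∈
      {w : List A | ∃ x r, x ∈ (Set.univ : Set (List A)) ∧
        r ∈ {r : List A | ∃ s t, s ∈ ({[p.1]} : Set (List A)) ∧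
          t ∈ {t : List A | ∃ y q, y ∈ {y : List A | y.length = m} ∧
            q ∈ {q : List A | ∃ b v, b ∈ ({[p.2]} : Set (List A)) ∧
              v ∈ (Set.univ : Set (List A)) ∧ q = b ++ v} ∧ t = y ++ q} ∧ r = s ++ t} ∧
        w = x ++ r}}) := by
    refine SF.iUnion _ fun p => SF.guarded _ fun _ => ?_
    exact SF.univ.concat ((StarFree.single _).concat ((SF.length m).concat
      ((StarFree.single _).concat SF.univ)))
  have h := SF.inter (SF.inter ((SF.word u).concat SF.univ) (SF.univ.concat (SF.word u)))
    hbad.compl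
  convert h using 1
  ext w
  simp only [Set.mem_ofPred_eq, Set.mem_inter_iff, Set.mem_compl_iff, Set.mem_iUnion, not_exists,
    Set.mem_univ, Set.mem_singleton_iff, true_and]
  constructor
  · rintro ⟨z, h1, h2⟩
    refine ⟨⟨⟨u, z, rfl, h1⟩, ⟨z, u, rfl, h2⟩⟩, ?_⟩
    rintro ⟨a, b⟩ ⟨hab, x, r, ⟨s, t, rfl, ⟨y, q, hy, ⟨b', v, rfl, rfl⟩, rfl⟩, rfl⟩, rfl⟩
    apply hab
    have hlen := congrArg List.length h1
    have e1 : (u ++ z)[x.length + (m + 1)]? = some b := by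
      rw [← h1, List.getElem?_append_right (by omega)]
      simp only [List.singleton_append, Nat.add_sub_cancel_left, List.getElem?_cons_succ]
      rw [List.getElem?_append_right (by omega)]
      simp [hy]
    have e2 : (z ++ u)[x.length]? = some a := by
      rw [← h2]
      simp
    simp only [List.length_append, List.length_cons, List.length_nil] at hlen
    rw [List.getElem?_append_right (by omega)] at e1
    rw [List.getElem?_append_left (by omega)] at e2
    have : x.length + (m + 1) - u.length = x.length := by omega
    rw [this, e2] at e1
    simpa using e1
  · rintro ⟨⟨⟨u', z, rfl, h1⟩, ⟨t, u'', rfl, h2⟩⟩, hn⟩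
    have hlen : z.length = t.length := by
      have := congrArg List.length (h1.symm.trans h2)
      simp only [List.length_append] at this
      omega
    have hzt : z = t := by
      apply List.ext_getElem hlen
      intro i hi hi'
      by_contra hne
      have hw : w.length = m + 1 + z.length := by rw [h1]; simp [hm]
      have hi1 : i < w.length := by omega
      have hi2 : m < (w.drop (i + 1)).length := by rw [List.length_drop]; omega
      have e1 : w[i] = t[i] := by simp [h2, hi']
      have e2 : (w.drop (i + 1))[m] = z[i] := by
        rw [List.getElem_drop]
        have : (u'' ++ z)[i + 1 + m]? = z[i]? := by
          rw [List.getElem?_append_right (by omega)]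
          congr 1
          omega
        rw [← h1, List.getElem?_eq_getElem (by omega), List.getElem?_eq_getElem hi] at this
        simpa using this
      refine hn (t[i], z[i]) ⟨fun h => hne h.symm, w.take i, w.drop i, ⟨[t[i]], w.drop (i + 1),
        rfl, ⟨(w.drop (i + 1)).take m, (w.drop (i + 1)).drop m, ?_, ⟨[z[i]],
          (w.drop (i + 1)).drop (m + 1), rfl, ?_⟩, ?_⟩, ?_⟩, ?_⟩
      · rw [List.length_take]; omega
      · rw [← e2]
        exact List.drop_eq_getElem_cons hi2
      · exact (List.take_append_drop _ _).symm
      · rw [← e1]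
        exact List.drop_eq_getElem_cons hi1
      · exact (List.take_append_drop _ _).symm
    subst hzt
    exact ⟨z, h1, h2⟩

/-! ### Commuting words -/

theorem wpow_comm {A : Type} {u z : List A} (h : u ++ z = z ++ u) (i : ℕ) :
    u ++ wpow z i = wpow z i ++ u := by
  induction i with
  | zero => simp [wpow]
  | succ i ih =>
    simp only [wpow]
    rw [← List.append_assoc, h, List.append_assoc, ih, List.append_assoc]

theorem wpow_length {A : Type} (u : List A) (i : ℕ) : (wpow u i).length = i * u.length := by
  induction i with
  | zero => simp [wpow]
  | succ i ih => simp only [wpow, List.length_append, ih]; ring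

theorem wpow_eq {A : Type} {u z : List A} (h : u ++ z = z ++ u) :
    wpow u z.length = wpow z u.length := by
  have h1 := wpow_comm (wpow_comm h u.length).symm z.length
  exact (List.append_inj h1 (by rw [wpow_length, wpow_length, Nat.mul_comm])).1.symm

/-! ### Reverse automata on a finite chain -/

theorem foldr_mono {A K : Type} [PartialOrder K] (f : A → K → K) (hf : ∀ a, Monotone (f a))
    (w : List A) : Monotone (fun k => w.foldr f k) := by
  induction w with
  | nil => exact monotone_id
  | cons a w ih => exact (hf a).comp ih

theorem foldr_wpow {A K : Type} (f : A → K → K) (z : List A) (i : ℕ) (k : K) :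
    (wpow z i).foldr f k = (fun k => z.foldr f k)^[i] k := by
  induction i with
  | zero => rfl
  | succ i ih => rw [Function.iterate_succ_apply', wpow, List.foldr_append, ih]

theorem foldr_fixed {A K : Type} [PartialOrder K] (tot : ∀ x y : K, x ≤ y ∨ y ≤ x)
    (f : A → K → K) (hf : ∀ a, Monotone (f a)) (u z : List A) (hu : u ≠ [])
    (h : u ++ z = z ++ u) (k : K) (hk : u.foldr f k = k) : z.foldr f k = k := by
  have e : (fun k => z.foldr f k)^[u.length] k = k := by
    rw [← foldr_wpow, ← wpow_eq h, foldr_wpow]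
    exact Function.iterate_fixed hk _
  have hm := foldr_mono f hf z
  have hpos : 1 ≤ u.length := List.length_pos_iff.2 hu
  rcases tot k (z.foldr f k) with hle | hle
  · have := hm.monotone_iterate_of_le_map hle hpos
    simp only [e, Function.iterate_one] at this
    exact le_antisymm this hle
  · have := hm.antitone_iterate_of_map_le hle hpos
    simp only [e, Function.iterate_one] at this
    exact le_antisymm hle this

theorem foldr_absorb {A K : Type} (f : A → K → K) (T : Set K)
    (hT : ∀ k ∈ T, ∀ a, f a k = k) (w : List A) (k : K) (hk : k ∈ T) : w.foldr f k = k := by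
  induction w with
  | nil => rfl
  | cons a w ih => rw [List.foldr_cons, ih, hT k hk]

/-- Two words whose reverse runs avoid the absorbing set are suffix-comparable. -/
theorem foldr_suffix {A K : Type} (f : A → K → K) (T : Set K)
    (hT : ∀ k ∈ T, ∀ a, f a k = k) (huniq : ∀ k a b, f a k ∉ T → f b k ∉ T → a = b)
    (x : List A) : ∀ (w : List A) (k : K), x.foldr f k ∉ T → w.foldr f k ∉ T →
      x.length ≤ w.length → x <:+ w := by
  induction x using List.reverseRecOn with
  | nil => intro w k _ _ _; exact List.nil_suffix
  | append_singleton x a ih =>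
    intro w k hx hw hl
    rcases List.eq_nil_or_concat w with rfl | ⟨w, b, rfl⟩
    · simp at hl
    · simp only [List.concat_eq_append, List.foldr_append, List.foldr_cons, List.foldr_nil] at hx hw
      have ha : f a k ∉ T := fun h => hx (by rwa [foldr_absorb f T hT _ _ h])
      have hb : f b k ∉ T := fun h => hw (by rwa [foldr_absorb f T hT _ _ h])
      obtain rfl := huniq k a b ha hb
      obtain ⟨y, rfl⟩ := ih w _ hx hw (by simpa using hl)
      exact ⟨y, by simp⟩

theorem SF.loop {A K : Type} [Finite A] [PartialOrder K]
    (tot : ∀ x y : K, x ≤ y ∨ y ≤ x) (f : A → K → K) (hf : ∀ a, Monotone (f a)) (T : Set K)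
    (hT : ∀ k ∈ T, ∀ a, f a k = k) (huniq : ∀ k a b, f a k ∉ T → f b k ∉ T → a = b)
    (k : K) (hk : k ∉ T) : StarFree {w : List A | w.foldr f k = k} := by
  classical
  by_cases hex : ∃ n, ∃ u : List A, u ≠ [] ∧ u.foldr f k = k ∧ u.length = n
  · obtain ⟨u, hu, huk, hul⟩ := Nat.find_spec hex
    have hmin : ∀ w : List A, w ≠ [] → w.foldr f k = k → u.length ≤ w.length := by
      intro w h1 h2
      rw [hul]
      exact Nat.find_min' hex ⟨w, h1, h2, rfl⟩
    have hsuf : ∀ w : List A, w ≠ [] → w.foldr f k = k → ∃ y, w = y ++ u ∧ y.foldr f k = k := by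
      intro w h1 h2
      obtain ⟨y, rfl⟩ := foldr_suffix f T hT huniq u w k (by rwa [huk]) (by rwa [h2]) (hmin w h1 h2)
      rw [List.foldr_append, huk] at h2
      exact ⟨y, rfl, h2⟩
    have hcomm : ∀ n, ∀ y : List A, y.length = n → y.foldr f k = k → u ++ y = y ++ u := by
      intro n
      induction n using Nat.strong_induction_on with
      | _ n ih =>
        intro y hn hy
        by_cases hy0 : y = []
        · simp [hy0]
        · obtain ⟨y', rfl, hy'⟩ := hsuf y hy0 hy
          have hpos := List.length_pos_iff.2 hu
          have := ih y'.length (by rw [← hn, List.length_append]; omega) y' rfl hy'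
          rw [← List.append_assoc, this]
    convert StarFree.eps.union (SF.comm u hu) using 1
    ext w
    simp only [Set.mem_ofPred_eq, Set.mem_union, Set.mem_singleton_iff]
    constructor
    · intro hw
      by_cases hw0 : w = []
      · exact Or.inl hw0
      · obtain ⟨y, rfl, hy⟩ := hsuf w hw0 hw
        exact Or.inr ⟨y, (hcomm _ y rfl hy).symm, rfl⟩
    · rintro (rfl | ⟨z, h1, h2⟩)
      · rfl
      · rw [h1, List.foldr_append, foldr_fixed tot f hf u z hu (h1.symm.trans h2) k huk, huk]
  · convert StarFree.eps (A := A) using 1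
    ext w
    simp only [Set.mem_ofPred_eq, Set.mem_singleton_iff]
    constructor
    · intro h
      by_contra h0
      exact hex ⟨_, w, h0, h, rfl⟩
    · rintro rfl
      rfl

theorem SF.path {A K : Type} [Finite A] [PartialOrder K]
    (tot : ∀ x y : K, x ≤ y ∨ y ≤ x) (f : A → K → K) (hf : ∀ a, Monotone (f a)) (T : Set K)
    (hT : ∀ k ∈ T, ∀ a, f a k = k) (huniq : ∀ k a b, f a k ∉ T → f b k ∉ T → a = b)
    (k k' : K) (hk' : k' ∉ T) : StarFree {w : List A | w.foldr f k = k'} := by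
  classical
  by_cases hex : ∃ n, ∃ u : List A, u.foldr f k = k' ∧ u.length = n
  · obtain ⟨u, huk, hul⟩ := Nat.find_spec hex
    convert (SF.loop tot f hf T hT huniq k' hk').concat (SF.word u) using 1
    ext w
    simp only [Set.mem_ofPred_eq, Set.mem_singleton_iff]
    constructor
    · intro hw
      obtain ⟨y, rfl⟩ := foldr_suffix f T hT huniq u w k (by rwa [huk]) (by rwa [hw])
        (by rw [hul]; exact Nat.find_min' hex ⟨w, hw, rfl⟩)
      rw [List.foldr_append, huk] at hw
      exact ⟨y, u, hw, rfl, rfl⟩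
    · rintro ⟨y, v, hy, rfl, rfl⟩
      rw [List.foldr_append, huk, hy]
  · convert StarFree.empty (A := A) using 1
    ext w
    simp only [Set.mem_ofPred_eq, Set.mem_empty_iff_false, iff_false]
    intro h
    exact hex ⟨_, w, h, rfl⟩

theorem SF.pathAll {A K : Type} [Finite A] [PartialOrder K] [Finite K]
    (tot : ∀ x y : K, x ≤ y ∨ y ≤ x) (f : A → K → K) (hf : ∀ a, Monotone (f a)) (T : Set K)
    (hT : ∀ k ∈ T, ∀ a, f a k = k) (huniq : ∀ k a b, f a k ∉ T → f b k ∉ T → a = b)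
    (k k' : K) : StarFree {w : List A | w.foldr f k = k'} := by
  by_cases hk' : k' ∈ T
  · by_cases hk : k ∈ T
    · by_cases e : k = k'
      · convert SF.univ (A := A) using 1
        ext w
        simp [foldr_absorb f T hT w k' hk', e]
      · convert StarFree.empty (A := A) using 1
        ext w
        simp [foldr_absorb f T hT w k hk, e]
    · have h : StarFree (⋃ p : A × K, {w : List A | (p.2 ∉ T ∧ f p.1 p.2 = k') ∧ w ∈
          {w : List A | ∃ x r, x ∈ (Set.univ : Set (List A)) ∧
            r ∈ {r : List A | ∃ s t, s ∈ ({[p.1]} : Set (List A)) ∧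
              t ∈ {w : List A | w.foldr f k = p.2} ∧ r = s ++ t} ∧ w = x ++ r}}) :=
        SF.iUnion _ fun p => SF.guarded _ fun hp =>
          SF.univ.concat ((StarFree.single _).concat (SF.path tot f hf T hT huniq k p.2 hp.1))
      convert h using 1
      ext w
      simp only [Set.mem_ofPred_eq, Set.mem_iUnion, Set.mem_univ, Set.mem_singleton_iff, true_and]
      constructor
      · intro hw
        induction w with
        | nil => exact absurd (show k ∈ T from (show k = k' from hw) ▸ hk') hk
        | cons a w ih =>
          by_cases hwT : w.foldr f k ∈ T
          · rw [List.foldr_cons, hT _ hwT] at hw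
            obtain ⟨p, hp, x, r, hr, rfl⟩ := ih hw
            exact ⟨p, hp, a :: x, r, hr, rfl⟩
          · exact ⟨(a, w.foldr f k), ⟨hwT, hw⟩, [], a :: w, ⟨[a], w, rfl, rfl, rfl⟩, rfl⟩
      · rintro ⟨⟨a, q⟩, ⟨_, h2⟩, x, r, ⟨s, t, rfl, ht, rfl⟩, rfl⟩
        simp only at h2 ht
        simp only [List.foldr_append, List.foldr_cons, List.foldr_nil, ht, h2]
        exact foldr_absorb f T hT x k' hk'
  · exact SF.path tot f hf T hT huniq k k' hk'

theorem SF.chain {A K : Type} [Finite A] [PartialOrder K] [Finite K]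
    (tot : ∀ x y : K, x ≤ y ∨ y ≤ x) (f : A → K → K) (hf : ∀ a, Monotone (f a)) (T : Set K)
    (hT : ∀ k ∈ T, ∀ a, f a k = k) (huniq : ∀ k a b, f a k ∉ T → f b k ∉ T → a = b)
    (k : K) (acc : Set K) : StarFree {w : List A | w.foldr f k ∈ acc} := by
  have h : StarFree (⋃ k' : K, {w : List A | k' ∈ acc ∧ w ∈ {w : List A | w.foldr f k = k'}}) :=
    SF.iUnion _ fun k' => SF.guarded _ fun _ => SF.pathAll tot f hf T hT huniq k k'
  convert h using 1
  ext w
  simp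

/-! ### Runs of partial DFAs -/

theorem evalFrom_append {A Q : Type} (M : PDFA A Q) (u v : List A) (q : Q) :
    M.evalFrom q (u ++ v) = (M.evalFrom q u).bind fun p => M.evalFrom p v := by
  induction u generalizing q with
  | nil => rfl
  | cons a u ih =>
    simp only [List.cons_append, PDFA.evalFrom]
    cases M.trans q a with
    | none => rfl
    | some p => simpa using ih p

theorem evalFrom_none {A Q : Type} (M : PDFA A Q) (w : List A) (q : Q)
    (h : M.evalFrom q w = none) :
    ∃ p a s q', w = p ++ ([a] ++ s) ∧ M.evalFrom q p = some q' ∧ M.trans q' a = none := by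
  induction w generalizing q with
  | nil => simp [PDFA.evalFrom] at h
  | cons a w ih =>
    rcases e : M.trans q a with _ | q1
    · exact ⟨[], a, w, q, rfl, rfl, e⟩
    · simp only [PDFA.evalFrom, e, Option.bind_some] at h
      obtain ⟨p, b, s, q', rfl, h1, h2⟩ := ih q1 h
      exact ⟨a :: p, b, s, q', rfl, by simpa [PDFA.evalFrom, e] using h1, h2⟩

/-- Pull back of a lower set of states along a letter. -/
def pull {A Q : Type} [LinearOrder Q] (M : PDFA A Q) (a : A) (S : LowerSet Q) : LowerSet Q where
  carrier := {q | ((∃ s, s ∈ S) ∧ ∀ p p', M.trans p a = some p' → p' ∈ S) ∨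
    ∃ p p', q ≤ p ∧ M.trans p a = some p' ∧ p' ∈ S}
  lower' := by
    rintro x y hyx (h | ⟨p, p', h1, h2⟩)
    · exact Or.inl h
    · exact Or.inr ⟨p, p', hyx.trans h1, h2⟩

theorem mem_pull {A Q : Type} [LinearOrder Q] (M : PDFA A Q) (a : A) (S : LowerSet Q) (q : Q) :
    q ∈ pull M a S ↔ ((∃ s, s ∈ S) ∧ ∀ p p', M.trans p a = some p' → p' ∈ S) ∨
    ∃ p p', q ≤ p ∧ M.trans p a = some p' ∧ p' ∈ S := Iff.rfl

theorem wheeler_aux {A Q : Type} [Finite A] [LinearOrder A] [Finite Q] [LinearOrder Q]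
    (M : PDFA A Q)
    (h1 : ∀ u₁ a₁ v₁ u₂ a₂ v₂, M.trans u₁ a₁ = some v₁ → M.trans u₂ a₂ = some v₂ →
      a₁ < a₂ → v₁ < v₂)
    (h2 : ∀ u₁ a v₁ u₂ v₂, M.trans u₁ a = some v₁ → M.trans u₂ a = some v₂ →
      u₁ ≤ u₂ → v₁ ≤ v₂) : StarFree M.accepts := by
  classical
  have : Finite (LowerSet Q) := Finite.of_injective (fun S : LowerSet Q => (S : Set Q))
    SetLike.coe_injective
  have tot : ∀ S S' : LowerSet Q, S ≤ S' ∨ S' ≤ S := fun S S' => S.lower.total S'.lower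
  have hf : ∀ a, Monotone (pull M a) := by
    rintro a S S' hSS q (⟨⟨s, hs⟩, h⟩ | ⟨p, p', ha, hb, hc⟩)
    · exact Or.inl ⟨⟨s, hSS hs⟩, fun p p' hp => hSS (h p p' hp)⟩
    · exact Or.inr ⟨p, p', ha, hb, hSS hc⟩
  have hT : ∀ S ∈ ({⊤, ⊥} : Set (LowerSet Q)), ∀ a, pull M a S = S := by
    rintro S (rfl | rfl) a
    · ext q
      simp only [SetLike.mem_coe, mem_pull]
      simp only [LowerSet.mem_top, implies_true, and_true, iff_true]
      exact Or.inl ⟨q, trivial⟩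
    · ext q
      simp only [SetLike.mem_coe, mem_pull]
      simp
  have hnt : ∀ S a, pull M a S ∉ ({⊤, ⊥} : Set (LowerSet Q)) →
      (∃ p p', M.trans p a = some p' ∧ p' ∈ S) ∧ (∃ p p', M.trans p a = some p' ∧ p' ∉ S) := by
    intro S a h
    simp only [Set.mem_insert_iff, Set.mem_singleton_iff, not_or] at h
    obtain ⟨ha, hb⟩ := h
    have hbad : ∃ q, q ∈ pull M a S := by
      by_contra hc
      push Not at hc
      exact hb (by ext q; simpa using hc q)
    have hnall : ¬ ((∃ s, s ∈ S) ∧ ∀ p p', M.trans p a = some p' → p' ∈ S) := by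
      intro hc
      exact ha (by ext q; exact ⟨fun _ => trivial, fun _ => Or.inl hc⟩)
    obtain ⟨q, hq⟩ := hbad
    rw [mem_pull] at hq
    obtain ⟨p, p', _, hp, hp'⟩ := hq.resolve_left hnall
    refine ⟨⟨p, p', hp, hp'⟩, ?_⟩
    by_contra hc
    push Not at hc
    exact hnall ⟨⟨p', hp'⟩, hc⟩
  have huniq : ∀ S a b, pull M a S ∉ ({⊤, ⊥} : Set (LowerSet Q)) →
      pull M b S ∉ ({⊤, ⊥} : Set (LowerSet Q)) → a = b := by
    intro S a b ha hb
    obtain ⟨⟨p1, q1, e1, m1⟩, ⟨p2, q2, e2, m2⟩⟩ := hnt S a ha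
    obtain ⟨⟨p3, q3, e3, m3⟩, ⟨p4, q4, e4, m4⟩⟩ := hnt S b hb
    rcases lt_trichotomy a b with hab | hab | hab
    · exact absurd (S.lower (h1 _ _ _ _ _ _ e2 e3 hab).le m3) m2
    · exact hab
    · exact absurd (S.lower (h1 _ _ _ _ _ _ e4 e1 hab).le m1) m4
  have hD : ∀ S : LowerSet Q, StarFree {w : List A | M.init ∈ w.foldr (pull M) S} := fun S =>
    SF.chain tot (pull M) hf _ hT huniq S {S' | M.init ∈ S'}
  have hcorr : ∀ (w : List A) (q q' : Q) (S : LowerSet Q), M.evalFrom q w = some q' →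
      (q ∈ w.foldr (pull M) S ↔ q' ∈ S) := by
    intro w
    induction w with
    | nil =>
      intro q q' S h
      simp only [PDFA.evalFrom, Option.some.injEq] at h
      subst h
      rfl
    | cons a w ih =>
      intro q q' S h
      rcases e : M.trans q a with _ | q1
      · simp [PDFA.evalFrom, e] at h
      · simp only [PDFA.evalFrom, e, Option.bind_some] at h
        rw [← ih q1 q' S h, List.foldr_cons, mem_pull]
        constructor
        · rintro (hc | ⟨p, p', hp, hp', hm⟩)
          · exact hc.2 q q1 e
          · exact (List.foldr (pull M) S w).lower (h2 _ _ _ _ _ e hp' hp) hm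
        · intro hm
          exact Or.inr ⟨q, q1, le_rfl, e, hm⟩
  let J : Q → Set (List A) := fun q => {w : List A | M.init ∈ w.foldr (pull M) (LowerSet.Iic q)} ∩
    {w : List A | M.init ∈ w.foldr (pull M) (LowerSet.Iio q)}ᶜ
  have hJ : ∀ q, StarFree (J q) := fun q => SF.inter (hD _) (hD _).compl
  have hJc : ∀ (w : List A) (q q' : Q), M.evalFrom M.init w = some q' → (w ∈ J q ↔ q' = q) := by
    intro w q q' h
    simp only [J, Set.mem_inter_iff, Set.mem_ofPred_eq, Set.mem_compl_iff, hcorr w _ _ _ h,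
      LowerSet.mem_Iic_iff, LowerSet.mem_Iio_iff, not_lt]
    exact ⟨fun h => le_antisymm h.1 h.2, fun h => ⟨h.le, h.ge⟩⟩
  have hbad : StarFree (⋃ p : Q × A, {w : List A | M.trans p.1 p.2 = none ∧ w ∈
      {w : List A | ∃ x r, x ∈ J p.1 ∧ r ∈ {r : List A | ∃ s t, s ∈ ({[p.2]} : Set (List A)) ∧
        t ∈ (Set.univ : Set (List A)) ∧ r = s ++ t} ∧ w = x ++ r}}) :=
    SF.iUnion _ fun p => SF.guarded _ fun _ => (hJ _).concat ((StarFree.single _).concat SF.univ)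
  have hacc : StarFree (⋃ q : Q, {w : List A | M.accept q ∧ w ∈ J q}) :=
    SF.iUnion _ fun q => SF.guarded _ fun _ => hJ q
  convert SF.inter hacc hbad.compl using 1
  ext w
  simp only [PDFA.accepts, Set.mem_ofPred_eq, Set.mem_inter_iff, Set.mem_compl_iff, Set.mem_iUnion,
    Set.mem_univ, Set.mem_singleton_iff, true_and]
  constructor
  · rintro ⟨q, hq, ha⟩
    refine ⟨⟨q, ha, (hJc w q q hq).2 rfl⟩, ?_⟩
    rintro ⟨⟨p, a⟩, hpa, x, r, hx, ⟨s, t, rfl, rfl⟩, rfl⟩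
    simp only at hpa hx
    rw [evalFrom_append] at hq
    rcases e : M.evalFrom M.init x with _ | q1
    · simp [e] at hq
    · obtain rfl := (hJc x p q1 e).1 hx
      simp [e, PDFA.evalFrom, hpa] at hq
  · rintro ⟨⟨q, ha, hq⟩, hn⟩
    rcases e : M.evalFrom M.init w with _ | q1
    · exfalso
      obtain ⟨p, a, s, q', rfl, e1, e2⟩ := evalFrom_none M w _ e
      exact hn ⟨(q', a), e2, p, [a] ++ s, (hJc p q' q' e1).2 rfl, ⟨[a], s, rfl, rfl⟩, rfl⟩
    · obtain rfl := (hJc w q q1 e).1 hq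
      exact ⟨q1, rfl, ha⟩

section Statement16

/-- every generalized Wheeler language (Wheeler with respect
to some linear order of the alphabet) is star-free. -/
theorem statement16 {A : Type} [Fintype A] (L : Set (List A))
    (h : ∃ inst : LinearOrder A, @IsWheelerLang A inst L) :
    StarFree L := by
  classical
  obtain ⟨inst, n, M, r, ⟨hr, _, _, hw⟩, rfl⟩ := h
  let _ : LinearOrder (Fin n) := linearOrderOfSTO r
  refine wheeler_aux M ?_ ?_
  · intro u₁ a₁ v₁ u₂ a₂ v₂ e1 e2 hlt
    exact (hw _ _ _ _ _ _ e1 e2).1 hlt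
  · intro u₁ a v₁ u₂ v₂ e1 e2 hle
    rcases hle with hle | hle
    · subst hle
      rw [e1] at e2
      exact Or.inl (Option.some.inj e2)
    · rcases (hw _ _ _ _ _ _ e1 e2).2 rfl hle with h | h
      · exact Or.inr h
      · exact Or.inl h

end Statement16

end WheelerPaper
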